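/- Let R be a field of characteristic zero, or of prime characteristic p > 2⌈⌊m/2⌋/n²⌉, and let n ≥ 1. Then the ring M_n E^m does not satisfy the Capelli identity of x-degree k = n² + 2⌊m/2⌋; that is, there exist C₁,…,C_k, B₀,…,B_k ∈ M_n E^m such that Σ_{π ∈ 𝔖_k} sign(π) · B₀ C_{π(1)} B₁ C_{π(2)} ⋯ B_{k−1} C_{π(k)} B_k ≠ 0. -/

import Mathlib

/-!
Taking matrix units for the `y`-variables collapses the Capelli polynomial of a matrix ring to a
single matrix unit times a column determinant over the coefficient ring: the `(j, i)` entry of that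
determinant is an entry of `x_j`, at a position which depends only on `i` and is ours to choose. If
each `x_j` is itself supported at the `j`-th chosen position, the matrix becomes block diagonal,
with one block for each of the `n²` positions and constant rows, so that its column determinant is
the product of the standard polynomials of the blocks. Distribute `2⌊m/2⌋` basis vectors over the
blocks, `2 t_l` of them to the `l`-th, and add a unit to each block. The unit drops out of a
standard polynomial of odd degree, its positions contributing alternating signs, and the standard
polynomial of `2 t` vectors is `(2 t)!` times their exterior product, so the determinant is
`∏ (2 t_l)!` times a basis vector of the exterior algebra.
-/

open Equiv.Perm Matrix ExteriorAlgebra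

open scoped Nat

section StandardPolynomial

variable {A : Type*} [Ring A] {k r s : ℕ}

/-- The value at `C` and `B` of the Capelli polynomial of `x`-degree `k`. -/
def capelliSum (C : Fin k → A) (B : Fin (k + 1) → A) : A :=
  ∑ π : Equiv.Perm (Fin k),
    (sign π : ℤ) • (B 0 * (List.ofFn fun i => C (π i) * B i.succ).prod)

/-- The column determinant of a matrix with noncommuting entries: the factors of each term are
multiplied in the order of the columns. -/
def columnDet (D : Matrix (Fin k) (Fin k) A) : A :=
  ∑ π : Equiv.Perm (Fin k), (sign π : ℤ) • (List.ofFn fun i => D (π i) i).prod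

/-- The value at `c` of the standard polynomial of degree `k`. -/
def standardSum (c : Fin k → A) : A :=
  ∑ π : Equiv.Perm (Fin k), (sign π : ℤ) • (List.ofFn fun i => c (π i)).prod

theorem columnDet_eq_mul_of_lowerLeft_eq_zero (D : Matrix (Fin (r + s)) (Fin (r + s)) A)
    (h : ∀ j i, D (Fin.natAdd r j) (Fin.castAdd s i) = 0) :
    columnDet D = columnDet (D.submatrix (Fin.castAdd s) (Fin.castAdd s)) *
      columnDet (D.submatrix (Fin.natAdd r) (Fin.natAdd r)) := by
  rw [columnDet, columnDet, columnDet, Finset.sum_mul_sum, ← Fintype.sum_prod_type']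
  symm
  refine Fintype.sum_of_injective
    (fun σ => finSumFinEquiv.permCongr (sumCongrHom (Fin r) (Fin s) σ))
    (finSumFinEquiv.permCongr.injective.comp sumCongrHom_injective) _ _ (fun π hπ => ?_)
    fun σ => ?_
  · obtain ⟨i, hi⟩ : ∃ i, ∀ j, π (Fin.castAdd s i) ≠ Fin.castAdd s j := by
      contrapose! hπ
      obtain ⟨σ, hσ⟩ := mem_sumCongrHom_range_of_perm_mapsTo_inl
        (σ := finSumFinEquiv.symm.permCongr π) <| by
          rintro _ ⟨i, rfl⟩
          obtain ⟨j, hj⟩ := hπ i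
          exact ⟨j, by simp [Equiv.permCongr_apply, hj]⟩
      exact ⟨σ, by simp only [hσ]; ext; simp [Equiv.permCongr_apply]⟩
    obtain ⟨j, hj⟩ : ∃ j, π (Fin.castAdd s i) = Fin.natAdd r j := by
      cases hx : π (Fin.castAdd s i) using Fin.addCases with
      | left j => exact absurd hx (hi j)
      | right j => exact ⟨j, rfl⟩
    rw [List.prod_eq_zero, smul_zero]
    exact List.mem_ofFn.2 ⟨Fin.castAdd s i, by rw [hj, h]⟩
  · have hsplit (f : Fin (r + s) → A) : (List.ofFn f).prod =
        (List.ofFn fun i => f (Fin.castAdd s i)).prod *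
          (List.ofFn fun j => f (Fin.natAdd r j)).prod := by
      rw [List.ofFn_add, List.prod_append]
      rfl
    rw [smul_mul_smul_comm]
    simp [hsplit, Equiv.permCongr_apply]

theorem prod_ofFn_eq_prod_ofFn_succAbove {M : Type*} [Monoid M] {x : Fin (k + 1) → M}
    {p : Fin (k + 1)} (hp : x p = 1) :
    (List.ofFn x).prod = (List.ofFn fun i => x (p.succAbove i)).prod := by
  induction k with
  | zero => simpa [Fin.fin_one_eq_zero p] using hp
  | succ k ih =>
    cases p using Fin.cases with
    | zero => simp [hp]
    | succ p =>
      rw [List.ofFn_succ, List.prod_cons, ih hp, List.ofFn_succ, List.prod_cons]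
      simp

theorem bijective_decomposeFin_symm_mul_cycleRange :
    Function.Bijective fun x : Fin (k + 1) × Equiv.Perm (Fin k) =>
      decomposeFin.symm (0, x.2) * x.1.cycleRange := by
  refine (Fintype.bijective_iff_injective_and_card _).2
    ⟨?_, by simp [Fintype.card_perm, Nat.factorial_succ]⟩
  rintro ⟨p, σ⟩ ⟨p', σ'⟩ h
  replace h : decomposeFin.symm (0, σ) * p.cycleRange =
    decomposeFin.symm (0, σ') * p'.cycleRange := h
  obtain rfl : p = p' := by
    have hp' : (decomposeFin.symm (0, σ) * p.cycleRange) p' = 0 := by rw [h]; simp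
    have hp : (decomposeFin.symm (0, σ) * p.cycleRange) p = 0 := by simp
    exact (Equiv.injective _) (hp.trans hp'.symm)
  simpa using mul_right_cancel h

theorem standardSum_cons_one (c : Fin k → A) :
    standardSum (Fin.cons 1 c : Fin (k + 1) → A) = if Even k then standardSum c else 0 := by
  have hterm (p : Fin (k + 1)) (σ : Equiv.Perm (Fin k)) :
      (List.ofFn fun i => (Fin.cons 1 c : Fin (k + 1) → A)
        ((decomposeFin.symm (0, σ) * p.cycleRange) i)).prod =
        (List.ofFn fun i => c (σ i)).prod := by
    rw [prod_ofFn_eq_prod_ofFn_succAbove (p := p) (by simp)]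
    simp
  calc standardSum (Fin.cons 1 c : Fin (k + 1) → A)
      = ∑ p : Fin (k + 1), (-1 : ℤ) ^ (p : ℕ) • standardSum c := by
        rw [standardSum, ← bijective_decomposeFin_symm_mul_cycleRange.sum_comp,
          Fintype.sum_prod_type]
        simp only [hterm, standardSum, Finset.smul_sum, smul_smul]
        simp [Fin.sign_cycleRange, mul_comm]
    _ = if Even k then standardSum c else 0 := by
        rw [← Finset.sum_smul, Fin.sum_neg_one_pow]
        simp [Nat.even_add_one, -Nat.not_even_iff_odd]

end StandardPolynomial

/-- The matrix with entries `c j` in the `j`-th row, at the columns with the same label as `j`, and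
zeros elsewhere. It is block diagonal if equal labels are adjacent. -/
def labelMatrix {A L : Type*} [Zero A] [DecidableEq L] {k : ℕ} (lab : Fin k → L)
    (c : Fin k → A) : Matrix (Fin k) (Fin k) A :=
  .of fun j i => if lab j = lab i then c j else 0

theorem columnDet_labelMatrix_append {A : Type*} [Ring A] {r s N : ℕ} (lab : Fin s → Fin N)
    (b : Fin r → A) (c : Fin s → A) :
    columnDet (labelMatrix (Fin.append (fun _ => 0) (Fin.succ ∘ lab)) (Fin.append b c)) =
      standardSum b * columnDet (labelMatrix lab c) := by
  rw [columnDet_eq_mul_of_lowerLeft_eq_zero _ fun j i => by simp [labelMatrix]]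
  congr 2
  · simp [columnDet, standardSum, labelMatrix]
  · ext j i
    simp [labelMatrix]

section MatrixRing

variable {A I : Type*} [Fintype I] [DecidableEq I] {k : ℕ}

theorem single_mul_prod_ofFn_mul_single [Semiring A] (C : Fin k → Matrix I I A)
    (ρ γ : Fin (k + 1) → I) :
    single (ρ 0) (γ 0) 1 * (List.ofFn fun i => C i * single (ρ i.succ) (γ i.succ) 1).prod =
      single (ρ 0) (γ (Fin.last k))
        (List.ofFn fun i => C i (γ i.castSucc) (ρ i.succ)).prod := by
  induction k with
  | zero => simp
  | succ k ih =>
    set P := (List.ofFn fun i : Fin k =>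
      C i.succ * single (ρ i.succ.succ) (γ i.succ.succ) 1).prod with hP
    calc _ = single (ρ 0) (γ 0) 1 * C 0 * single (ρ 1) (γ 1) 1 * P := by
          simp [List.ofFn_succ, hP, mul_assoc]
      _ = single (ρ 0) (ρ 1) (C 0 (γ 0) (ρ 1)) * (single (ρ 1) (γ 1) 1 * P) := by
          rw [single_mul_mul_single, ← mul_assoc, single_mul_single_same, one_mul]
      _ = _ := by
          rw [hP, ← Fin.succ_zero_eq_one,
            ih (fun i => C i.succ) (fun i => ρ i.succ) fun i => γ i.succ]
          simp [List.ofFn_succ]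

variable [Ring A]

theorem capelliSum_single (C : Fin k → Matrix I I A) (ρ γ : Fin (k + 1) → I) :
    capelliSum C (fun i => single (ρ i) (γ i) 1) =
      single (ρ 0) (γ (Fin.last k))
        (columnDet (.of fun j i => C j (γ i.castSucc) (ρ i.succ))) := by
  simp only [capelliSum, columnDet, of_apply, ← singleAddMonoidHom_apply, map_sum, map_zsmul]
  refine Finset.sum_congr rfl fun π _ => ?_
  congr 1
  exact single_mul_prod_ofFn_mul_single (C ∘ π) ρ γ

theorem exists_capelliSum_ne_zero_of_columnDet_ne_zero [Nonempty I] (C : Fin k → Matrix I I A)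
    (p : Fin k → I × I) (h : columnDet (.of fun j i => C j (p i).1 (p i).2) ≠ 0) :
    ∃ B : Fin (k + 1) → Matrix I I A, capelliSum C B ≠ 0 := by
  obtain ⟨i₀⟩ := ‹Nonempty I›
  refine ⟨fun i => single ((Fin.cons i₀ fun i => (p i).2 : Fin (k + 1) → I) i)
    ((Fin.snoc (fun i => (p i).1) i₀ : Fin (k + 1) → I) i) 1, ?_⟩
  rw [capelliSum_single]
  exact fun h₀ => h <| by simpa using congrFun₂ h₀ i₀ i₀

theorem exists_capelliSum_ne_zero_of_columnDet_labelMatrix_ne_zero [Nonempty I]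
    (p : Fin k → I × I) (c : Fin k → A) (h : columnDet (labelMatrix p c) ≠ 0) :
    ∃ (C : Fin k → Matrix I I A) (B : Fin (k + 1) → Matrix I I A), capelliSum C B ≠ 0 := by
  refine ⟨fun j => single (p j).1 (p j).2 (c j),
    exists_capelliSum_ne_zero_of_columnDet_ne_zero _ p ?_⟩
  simpa [single_apply, labelMatrix, Prod.ext_iff] using h

end MatrixRing

section ExteriorAlgebra

variable {R M : Type*} [CommRing R] [AddCommGroup M] [Module R M]

theorem standardSum_ι {q : ℕ} (v : Fin q → M) :
    standardSum (fun i => ι R (v i)) = q ! • ιMulti R q v := by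
  have hterm (π : Equiv.Perm (Fin q)) :
      (sign π : ℤ) • (List.ofFn fun i => ι R (v (π i))).prod = ιMulti R q v := by
    calc (sign π : ℤ) • (List.ofFn fun i => ι R (v (π i))).prod
        = sign π • ιMulti R q (v ∘ π) := by simp [ιMulti_apply, Units.smul_def]
      _ = ιMulti R q v := by simp [AlternatingMap.map_perm, smul_smul]
  simp [standardSum, hterm, Fintype.card_perm]

theorem smul_ιMulti_basis_eq_zero_iff {I : Type*} [LinearOrder I] (b : Module.Basis I R M)
    {q : ℕ} (f : Fin q ↪o I) (a : R) : a • ιMulti R q (b ∘ f) = 0 ↔ a = 0 := by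
  refine ⟨fun h => ?_, fun h => by rw [h, zero_smul]⟩
  let S := Set.powersetCard.ofFinEmbEquiv f
  have hS : exteriorPower.ιMulti_family R q b S = exteriorPower.ιMulti R q (b ∘ f) := by
    simp [exteriorPower.ιMulti_family, S]
  have h' : a • exteriorPower.ιMulti_family R q b S = 0 := Subtype.ext (by rw [hS]; exact h)
  simpa [exteriorPower.ιMultiDual_apply_diag] using
    congrArg (exteriorPower.ιMultiDual R q b S) h'

theorem exists_columnDet_labelMatrix_eq_smul_ιMulti {N : ℕ} (t : Fin N → ℕ) {q : ℕ}
    (hq : q = 2 * ∑ l, t l) (v : Fin q → M) {k : ℕ} (hk : k = N + q) :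
    ∃ (lab : Fin k → Fin N) (c : Fin k → ExteriorAlgebra R M),
      columnDet (labelMatrix lab c) = (∏ l, (2 * t l)!) • ιMulti R q v := by
  induction N generalizing q k with
  | zero =>
    obtain rfl : q = 0 := by simpa using hq
    obtain rfl : k = 0 := hk
    exact ⟨Fin.elim0, Fin.elim0, by simp [columnDet]⟩
  | succ N ih =>
    obtain ⟨q', hq'⟩ : ∃ q', q' = 2 * ∑ l : Fin N, t l.succ := ⟨_, rfl⟩
    obtain rfl : q = 2 * t 0 + q' := by rw [hq, hq', Fin.sum_univ_succ, mul_add]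
    obtain rfl : k = (2 * t 0 + 1) + (N + q') := by omega
    obtain ⟨lab, c, hdet⟩ := ih (fun l => t l.succ) hq' (fun i => v (Fin.natAdd _ i)) rfl
    let v₀ : Fin (2 * t 0) → M := fun i => v (Fin.castAdd _ i)
    refine ⟨Fin.append (fun _ => 0) (Fin.succ ∘ lab),
      Fin.append (Fin.cons 1 fun i => ι R (v₀ i)) c, ?_⟩
    rw [columnDet_labelMatrix_append, standardSum_cons_one, if_pos (even_two_mul _),
      standardSum_ι, hdet, smul_mul_smul_comm, ιMulti_mul_ιMulti, Fin.prod_univ_succ,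
      Fin.append_castAdd_natAdd]

end ExteriorAlgebra

theorem exists_sum_eq_of_le_mul {N T q : ℕ} (h : q ≤ N * T) :
    ∃ t : Fin N → ℕ, (∀ l, t l ≤ T) ∧ ∑ l, t l = q := by
  induction N generalizing q with
  | zero => exact ⟨Fin.elim0, fun l => l.elim0, by simp_all⟩
  | succ N ih =>
    obtain ⟨t, htT, hts⟩ := ih (q := q - T) (by rw [Nat.succ_mul] at h; omega)
    refine ⟨Fin.cons (min q T) t, Fin.cases (by simp) (by simpa using htT), ?_⟩
    rw [Fin.sum_univ_succ]
    simp only [Fin.cons_zero, Fin.cons_succ, hts]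
    omega

theorem cast_factorial_pow_ne_zero {R : Type*} [Semiring R] {a : ℕ}
    (h : CharZero R ∨ ∃ p : ℕ, p.Prime ∧ CharP R p ∧ a < p) (e : ℕ) :
    ((a ! ^ e : ℕ) : R) ≠ 0 := by
  rcases h with _ | ⟨p, hp, _, hap⟩
  · exact Nat.cast_ne_zero.2 (pow_ne_zero e a.factorial_ne_zero)
  · rw [Ne, CharP.cast_eq_zero_iff R p]
    exact fun hdvd => hap.not_ge (hp.dvd_factorial.1 (hp.dvd_of_dvd_pow hdvd))

theorem grassmann_matrix_no_capelli_identity_general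
    (R : Type*) [CommRing R] (m n : ℕ) (hn : 1 ≤ n) {T : ℕ} (hT : m / 2 ≤ n ^ 2 * T)
    (hR : (((2 * T)! ^ n ^ 2 : ℕ) : R) ≠ 0) (k : ℕ) (hk : k = n ^ 2 + 2 * (m / 2)) :
    ∃ (C : Fin k → Matrix (Fin n) (Fin n) (ExteriorAlgebra R (Fin m → R)))
      (B : Fin (k + 1) → Matrix (Fin n) (Fin n) (ExteriorAlgebra R (Fin m → R))),
      capelliSum C B ≠ 0 := by
  have : Nonempty (Fin n) := ⟨⟨0, hn⟩⟩
  obtain ⟨t, htT, hts⟩ := exists_sum_eq_of_le_mul hT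
  let f : Fin (2 * (m / 2)) ↪o Fin m := Fin.castLEOrderEmb (Nat.mul_div_le m 2)
  obtain ⟨lab, c, hdet⟩ := exists_columnDet_labelMatrix_eq_smul_ιMulti (R := R) t
    (by rw [hts]) (Pi.basisFun R (Fin m) ∘ f) hk
  let e : Fin (n ^ 2) ≃ Fin n × Fin n := (Fintype.equivFinOfCardEq (by simp [sq])).symm
  have hlab : labelMatrix (e ∘ lab) c = labelMatrix lab c := by simp [labelMatrix]
  have hdvd : ∏ l, (2 * t l)! ∣ (2 * T)! ^ n ^ 2 := by
    simpa using Finset.prod_dvd_prod_of_dvd (s := Finset.univ) _ (fun _ => (2 * T)!) fun l _ =>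
      Nat.factorial_dvd_factorial (Nat.mul_le_mul_left 2 (htT l))
  apply exists_capelliSum_ne_zero_of_columnDet_labelMatrix_ne_zero (e ∘ lab) c
  rw [hlab, hdet, ← Nat.cast_smul_eq_nsmul R, Ne, smul_ιMulti_basis_eq_zero_iff]
  exact ne_zero_of_dvd_ne_zero hR (Nat.cast_dvd_cast hdvd)

/-- Over a field of characteristic zero or of prime characteristic
`p > 2⌈⌊m/2⌋/n²⌉`, the ring of `n × n` matrices over the Grassmann algebra of rank `m`
does not satisfy the Capelli identity of `x`-degree `k = n² + 2⌊m/2⌋`. -/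
theorem grassmann_matrix_no_capelli_identity
    (R : Type*) [Field R] (m n : ℕ) (hn : 1 ≤ n)
    (hchar : CharZero R ∨
      ∃ p : ℕ, p.Prime ∧ CharP R p ∧ 2 * ((m / 2 + n ^ 2 - 1) / n ^ 2) < p)
    (k : ℕ) (hk : k = n ^ 2 + 2 * (m / 2)) :
    ∃ (C : Fin k → Matrix (Fin n) (Fin n) (ExteriorAlgebra R (Fin m → R)))
      (B : Fin (k + 1) → Matrix (Fin n) (Fin n) (ExteriorAlgebra R (Fin m → R))),
      ∑ π : Equiv.Perm (Fin k),
        (Equiv.Perm.sign π : ℤ) •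
          (B 0 * (List.ofFn fun i : Fin k => C (π i) * B i.succ).prod) ≠ 0 :=
  grassmann_matrix_no_capelli_identity_general R m n hn
    (le_smul_ceilDiv (b := m / 2) (Nat.pow_pos hn : 0 < n ^ 2))
    (cast_factorial_pow_ne_zero hchar (n ^ 2)) k hk
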